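/- Let m ≥ 1 and T be natural numbers, c > 0 and d ≥ 0 reals, s : {1,…,T} → ℝ a sequence of item sizes with 0 < s_t < c for all t, and f : {1,…,T} → {1,…,m} an assignment of items to bins. For t ∈ {1,…,T+1} and bin b, define the level L_t(b) = Σ_{u < t, f(u) = b} s_u. Suppose the assignment satisfies the worst-fit property: for every t and every bin b, L_t(f(t)) ≤ L_t(b). If Σ_{t=1}^{T} s_t ≥ m·(d + c), then every bin's final level L_{T+1}(b) is at least d. -/

import Mathlib

/-!
If `t` is the last item placed in bin `a`, then just before `t` arrived `a` was no fuller than any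
other bin `b`. Since `t` has size at most `c` and `b` never loses anything afterwards, the final
level of `a` exceeds that of `b` by at most `c`. Summing over all bins `a`, where `a = b`
contributes no excess, bounds the total size in terms of the final level of `b` alone.
-/

open Finset

section DualWorstFit

variable {α β M : Type*} [DecidableEq β] [AddCommMonoid M]

/-- The level of bin `b` once exactly the items in `I` have been packed, where item `u` has size
`s u` and goes to bin `f u`. Times are encoded through `I`: the level on arrival of item `t` is the
one for `{u ∈ I | u < t}`. -/
def binLevel (s : α → M) (f : α → β) (I : Finset α) (b : β) : M :=
  ∑ u ∈ I with f u = b, s u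

/-- The worst-fit (least loaded bin) rule: each item of `I`, in the order of `α`, goes to a bin
whose level on its arrival is minimal among the bins in `B`. That `f` maps `I` into `B` is not part
of the definition. -/
def IsWorstFit [LT α] [DecidableLT α] [LE M] (s : α → M) (f : α → β) (I : Finset α)
    (B : Finset β) : Prop :=
  ∀ t ∈ I, ∀ b ∈ B, binLevel s f {u ∈ I | u < t} (f t) ≤ binLevel s f {u ∈ I | u < t} b

variable {s : α → M} {f : α → β} {I J : Finset α} {B : Finset β}

theorem sum_binLevel (hf : ∀ t ∈ I, f t ∈ B) : ∑ b ∈ B, binLevel s f I b = ∑ t ∈ I, s t :=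
  sum_fiberwise_of_maps_to hf s

theorem binLevel_eq_add_of_last [LinearOrder α] {t : α} (ht : t ∈ I)
    (hlast : ∀ u ∈ I, f u = f t → u ≤ t) :
    binLevel s f I (f t) = binLevel s f {u ∈ I | u < t} (f t) + s t := by
  have hinsert : {u ∈ I | f u = f t} = insert t {u ∈ {u ∈ I | u < t} | f u = f t} := by
    grind
  rw [binLevel, hinsert, sum_insert (by simp), add_comm, binLevel]

section PartialOrder

variable [PartialOrder M] [IsOrderedAddMonoid M]

theorem binLevel_nonneg (hs : ∀ t ∈ I, 0 ≤ s t) (b : β) : 0 ≤ binLevel s f I b :=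
  sum_nonneg fun t ht ↦ hs t (mem_of_mem_filter t ht)

theorem binLevel_mono (hIJ : I ⊆ J) (hs : ∀ t ∈ J, 0 ≤ s t) (b : β) :
    binLevel s f I b ≤ binLevel s f J b :=
  sum_le_sum_of_subset_of_nonneg (filter_subset_filter _ hIJ)
    fun t ht _ ↦ hs t (mem_of_mem_filter t ht)

theorem IsWorstFit.binLevel_le_add [LinearOrder α] (h : IsWorstFit s f I B) {c : M} (hc : 0 ≤ c)
    (hs : ∀ t ∈ I, 0 ≤ s t) (hsc : ∀ t ∈ I, s t ≤ c) (a : β) {b : β} (hb : b ∈ B) :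
    binLevel s f I a ≤ binLevel s f I b + c := by
  rcases {u ∈ I | f u = a}.eq_empty_or_nonempty with hempty | hne
  · calc binLevel s f I a = 0 := by rw [binLevel, hempty, sum_empty]
      _ ≤ binLevel s f I b + c := add_nonneg (binLevel_nonneg hs b) hc
  · obtain ⟨t, ht, hlast⟩ := exists_max_image _ id hne
    obtain ⟨htI, rfl⟩ := mem_filter.1 ht
    calc binLevel s f I (f t)
        = binLevel s f {u ∈ I | u < t} (f t) + s t :=
          binLevel_eq_add_of_last htI fun u hu hut ↦ hlast u (mem_filter.2 ⟨hu, hut⟩)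
      _ ≤ binLevel s f {u ∈ I | u < t} b + c := add_le_add (h t htI b hb) (hsc t htI)
      _ ≤ binLevel s f I b + c := by
          gcongr
          exact binLevel_mono (filter_subset _ _) hs b

theorem IsWorstFit.sum_add_le_card_nsmul [LinearOrder α] (h : IsWorstFit s f I B)
    (hf : ∀ t ∈ I, f t ∈ B) {c : M} (hc : 0 ≤ c) (hs : ∀ t ∈ I, 0 ≤ s t)
    (hsc : ∀ t ∈ I, s t ≤ c) {b : β} (hb : b ∈ B) :
    ∑ t ∈ I, s t + c ≤ #B • (binLevel s f I b + c) :=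
  calc ∑ t ∈ I, s t + c
      = ∑ a ∈ B.erase b, binLevel s f I a + (binLevel s f I b + c) := by
        rw [← sum_binLevel hf, ← sum_erase_add B _ hb, add_assoc]
    _ ≤ #(B.erase b) • (binLevel s f I b + c) + (binLevel s f I b + c) := by
        gcongr
        exact sum_le_card_nsmul _ _ _ fun a _ ↦ h.binLevel_le_add hc hs hsc a hb
    _ = #B • (binLevel s f I b + c) := by rw [← succ_nsmul, card_erase_add_one hb]

end PartialOrder

theorem stmt9_general [LinearOrder α] [LinearOrder M] [IsOrderedCancelAddMonoid M]
    (h : IsWorstFit s f I B) (hf : ∀ t ∈ I, f t ∈ B) {c d : M} (hc : 0 ≤ c)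
    (hs : ∀ t ∈ I, 0 ≤ s t) (hsc : ∀ t ∈ I, s t ≤ c)
    (htot : #B • (d + c) ≤ ∑ t ∈ I, s t + c) {b : β} (hb : b ∈ B) :
    d ≤ binLevel s f I b :=
  have hnsmul : #B • (d + c) ≤ #B • (binLevel s f I b + c) :=
    htot.trans (h.sum_add_le_card_nsmul hf hc hs hsc hb)
  le_of_add_le_add_right (le_of_nsmul_le_nsmul_right (card_ne_zero_of_mem hb) hnsmul)

end DualWorstFit

/-- Dual-Worst-Fit guarantee. -/
theorem stmt9 (m T : ℕ) (hm : 1 ≤ m) (c d : ℝ) (hc : 0 < c) (hd : 0 ≤ d)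
    (s : ℕ → ℝ) (hs : ∀ t ∈ Finset.Icc 1 T, 0 < s t ∧ s t < c)
    (f : ℕ → ℕ) (hf : ∀ t ∈ Finset.Icc 1 T, f t ∈ Finset.Icc 1 m)
    (L : ℕ → ℕ → ℝ)
    (hL : ∀ t b, L t b = ∑ u ∈ (Finset.Icc 1 T).filter (fun u => u < t ∧ f u = b), s u)
    (hwf : ∀ t ∈ Finset.Icc 1 T, ∀ b ∈ Finset.Icc 1 m, L t (f t) ≤ L t b)
    (htot : (m : ℝ) * (d + c) ≤ ∑ t ∈ Finset.Icc 1 T, s t) :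
    ∀ b ∈ Finset.Icc 1 m, d ≤ L (T + 1) b := by
  intro b hb
  have hlevel (t b : ℕ) : L t b = binLevel s f {u ∈ Icc 1 T | u < t} b := by
    rw [hL, binLevel, filter_filter]
  have hfinal : {u ∈ Icc 1 T | u < T + 1} = Icc 1 T :=
    filter_true_of_mem fun u hu ↦ Nat.lt_succ_of_le (mem_Icc.1 hu).2
  simp only [hlevel] at hwf
  rw [hlevel, hfinal]
  refine stmt9_general hwf hf hc.le (fun t ht ↦ (hs t ht).1.le) (fun t ht ↦ (hs t ht).2.le) ?_ hb
  rw [Nat.card_Icc, Nat.add_sub_cancel, nsmul_eq_mul]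
  linarith
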